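/- For any weak solution (X₁(·),X₂(·)) of the system (1.1)–(1.2), the set of times at which the two components coincide is almost surely Lebesgue-null: ℙ( Leb{ 0 ≤ t < ∞ : X₁(t) = X₂(t) } = 0 ) = 1. -/

import Mathlib

open MeasureTheory ProbabilityTheory Filter Set

noncomputable section

namespace SDEPaper

/-- The signum convention of the paper: `psgn y = 1` for `y > 0`, `= -1` for `y ≤ 0`. -/
def psgn (y : ℝ) : ℝ := if 0 < y then 1 else -1

variable {Ω : Type*} [m : MeasurableSpace Ω]

/-- The σ-algebra generated by the process `Ξ` on the time interval `[0, t]`. -/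
def natSA {E : Type*} [MeasurableSpace E] (Ξ : ℝ → Ω → E) (t : ℝ) : MeasurableSpace Ω :=
  ⨆ s ∈ Icc (0 : ℝ) t, MeasurableSpace.comap (Ξ s) inferInstance

/-- The `μ`-augmentation of a σ-algebra. -/
def augSA (μ : Measure Ω) (m' : MeasurableSpace Ω) : MeasurableSpace Ω :=
  m' ⊔ MeasurableSpace.generateFrom {A : Set Ω | μ A = 0}

/-- `𝔉^Ξ(t)`: the `μ`-augmented σ-algebra generated by the process `Ξ` up to time `t`. -/
def natFilt {E : Type*} [MeasurableSpace E] (μ : Measure Ω) (Ξ : ℝ → Ω → E) (t : ℝ) :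
    MeasurableSpace Ω := augSA μ (natSA Ξ t)

/-- Dyadic left-point Riemann sum of `H` against `X` on `[0,t]`. -/
def rsum (H X : ℝ → Ω → ℝ) (t : ℝ) (n : ℕ) (ω : Ω) : ℝ :=
  ∑ i ∈ Finset.range (2 ^ n),
    H (t * i / 2 ^ n) ω * (X (t * (i + 1) / 2 ^ n) ω - X (t * i / 2 ^ n) ω)

/-- `I = ∫₀^· H dX`: dyadic Riemann sums converge in probability, and `I 0 = 0` a.s. -/
def IsSI (μ : Measure Ω) (H X I : ℝ → Ω → ℝ) : Prop :=
  (∀ᵐ ω ∂μ, I 0 ω = 0) ∧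
  ∀ t : ℝ, 0 ≤ t → TendstoInMeasure μ (fun n => rsum H X t n) atTop (I t)

/-- `I = ∫₀^· H₁ dX₁ + ∫₀^· H₂ dX₂` in the sense of convergence in probability
of dyadic Riemann sums. -/
def IsSI2 (μ : Measure Ω) (H₁ X₁ H₂ X₂ I : ℝ → Ω → ℝ) : Prop :=
  (∀ᵐ ω ∂μ, I 0 ω = 0) ∧
  ∀ t : ℝ, 0 ≤ t →
    TendstoInMeasure μ (fun n ω => rsum H₁ X₁ t n ω + rsum H₂ X₂ t n ω) atTop (I t)

/-- Dyadic sums of products of increments. -/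
def qsum (X Y : ℝ → Ω → ℝ) (t : ℝ) (n : ℕ) (ω : Ω) : ℝ :=
  ∑ i ∈ Finset.range (2 ^ n),
    (X (t * (i + 1) / 2 ^ n) ω - X (t * i / 2 ^ n) ω) *
      (Y (t * (i + 1) / 2 ^ n) ω - Y (t * i / 2 ^ n) ω)

/-- `C = ⟨X,Y⟩`: the quadratic covariation, as a limit in probability of dyadic sums. -/
def IsQV (μ : Measure Ω) (X Y C : ℝ → Ω → ℝ) : Prop :=
  ∀ t : ℝ, 0 ≤ t → TendstoInMeasure μ (fun n => qsum X Y t n) atTop (C t)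

/-- `W` is a standard one-dimensional Brownian motion with respect to the family of
σ-algebras `F` (a filtration contained in the ambient σ-algebra). -/
structure IsBM (μ : Measure Ω) (F : ℝ → MeasurableSpace Ω) (W : ℝ → Ω → ℝ) : Prop where
  le : ∀ t : ℝ, F t ≤ m
  mono : Monotone F
  adapted : ∀ t : ℝ, 0 ≤ t → MeasurableSpace.comap (W t) inferInstance ≤ F t
  init : ∀ᵐ ω ∂μ, W 0 ω = 0
  cont : ∀ᵐ ω ∂μ, Continuous fun t => W t ω
  law : ∀ s t : ℝ, 0 ≤ s → s ≤ t →
    μ.map (fun ω => W t ω - W s ω) = gaussianReal 0 ((t - s).toNNReal)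
  indep : ∀ s t : ℝ, 0 ≤ s → s ≤ t →
    Indep (MeasurableSpace.comap (fun ω => W t ω - W s ω) inferInstance) (F s) μ

/-- `(B₁, B₂)` is a planar Brownian motion: two independent standard Brownian motions
with respect to the common filtration `F`. -/
def IsPlanarBM (μ : Measure Ω) (F : ℝ → MeasurableSpace Ω) (B₁ B₂ : ℝ → Ω → ℝ) : Prop :=
  IsBM μ F B₁ ∧ IsBM μ F B₂ ∧
    IndepFun (fun ω => (fun t => B₁ t ω)) (fun ω => (fun t => B₂ t ω)) μ

/-- `L` is the (right) local time at the origin of the process `Y`: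
`L t = lim_{ε ↓ 0} (4ε)⁻¹ ∫₀ᵗ 1{|Y(s)| < ε} ds`. -/
def IsLocalTime (μ : Measure Ω) (Y L : ℝ → Ω → ℝ) : Prop :=
  ∀ᵐ ω ∂μ, ∀ t : ℝ, 0 ≤ t →
    Tendsto (fun ε : ℝ =>
        (4 * ε)⁻¹ * ∫ s in (0:ℝ)..t, (if |Y s ω| < ε then (1:ℝ) else 0))
      (nhdsWithin 0 (Ioi 0)) (nhds (L t ω))

/-- A continuous local martingale with respect to the filtration `F`. -/
def IsContLocMart (μ : Measure Ω) (F : Filtration ℝ m) (M : ℝ → Ω → ℝ) : Prop :=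
  (∀ᵐ ω ∂μ, Continuous fun t => M t ω) ∧ StronglyAdapted F M ∧
    ∃ τ : ℕ → Ω → ℝ, (∀ n, IsStoppingTime F (fun ω => (τ n ω : WithTop ℝ))) ∧
      (∀ᵐ ω ∂μ, Tendsto (fun n => τ n ω) atTop atTop) ∧
      ∀ n, Martingale (fun t ω => M (min t (τ n ω)) ω) F μ

/-- Orthogonality: the cross-variation `⟨M,N⟩` vanishes identically. -/
def Orthogonal (μ : Measure Ω) (M N : ℝ → Ω → ℝ) : Prop :=
  IsQV μ M N fun _ _ => 0

/-- Domination: `⟨M⟩(t) = ∫₀ᵗ q(s) d⟨N⟩(s)` for a progressively measurable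
process `q` with values in `[0,c]`. -/
def Dominated (μ : Measure Ω) (F : Filtration ℝ m) (M N : ℝ → Ω → ℝ) (c : ℝ) : Prop :=
  ∃ QM QN q : ℝ → Ω → ℝ, IsQV μ M M QM ∧ IsQV μ N N QN ∧
    ProgMeasurable F q ∧ (∀ t ω, q t ω ∈ Icc (0:ℝ) c) ∧
    ∀ᵐ ω ∂μ, ∃ ν : Measure ℝ,
      (∀ a b : ℝ, 0 ≤ a → a ≤ b → ν (Ioc a b) = ENNReal.ofReal (QN b ω - QN a ω)) ∧
      ∀ t : ℝ, 0 ≤ t → QM t ω = ∫ s in Ioc (0:ℝ) t, q s ω ∂ν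

/-- The law of the two-dimensional process `(X₁, X₂)` on path space. -/
def pathLaw (μ : Measure Ω) (X₁ X₂ : ℝ → Ω → ℝ) : Measure (ℝ → ℝ × ℝ) :=
  μ.map fun ω => (fun t => (X₁ t ω, X₂ t ω))
/-- `(X₁, X₂)` solves the system (1.1)-(1.2) driven by `(B₁, B₂)`. -/
def Solves11 (μ : Measure Ω) (F : ℝ → MeasurableSpace Ω) (g h ρ σ x₁ x₂ : ℝ)
    (B₁ B₂ X₁ X₂ : ℝ → Ω → ℝ) : Prop :=
  (∀ t : ℝ, 0 ≤ t →
    MeasurableSpace.comap (fun ω => (X₁ t ω, X₂ t ω)) inferInstance ≤ F t) ∧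
  (∀ᵐ ω ∂μ, Continuous (fun t => X₁ t ω) ∧ Continuous (fun t => X₂ t ω)) ∧
  ∃ I₁ I₂ : ℝ → Ω → ℝ,
    IsSI μ (fun s ω => if X₁ s ω ≤ X₂ s ω then σ else ρ) B₁ I₁ ∧
    IsSI μ (fun s ω => if X₁ s ω ≤ X₂ s ω then ρ else σ) B₂ I₂ ∧
    ∀ᵐ ω ∂μ, ∀ t : ℝ, 0 ≤ t →
      X₁ t ω = x₁ + (∫ s in (0:ℝ)..t, (if X₁ s ω ≤ X₂ s ω then g else -h)) + I₁ t ω ∧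
      X₂ t ω = x₂ + (∫ s in (0:ℝ)..t, (if X₁ s ω ≤ X₂ s ω then -h else g)) + I₂ t ω

/-- `(X₁, X₂)` solves the system (4.7)-(4.8), driven by the single Brownian motion `W`. -/
def Solves47 (μ : Measure Ω) (F : ℝ → MeasurableSpace Ω) (g h x₁ x₂ : ℝ)
    (W X₁ X₂ : ℝ → Ω → ℝ) : Prop :=
  (∀ t : ℝ, 0 ≤ t →
    MeasurableSpace.comap (fun ω => (X₁ t ω, X₂ t ω)) inferInstance ≤ F t) ∧
  (∀ᵐ ω ∂μ, Continuous (fun t => X₁ t ω) ∧ Continuous (fun t => X₂ t ω)) ∧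
  ∃ I₁ I₂ : ℝ → Ω → ℝ,
    IsSI μ (fun s ω => if X₁ s ω ≤ X₂ s ω then (0:ℝ) else 1) W I₁ ∧
    IsSI μ (fun s ω => if X₁ s ω ≤ X₂ s ω then (-1:ℝ) else 0) W I₂ ∧
    ∀ᵐ ω ∂μ, ∀ t : ℝ, 0 ≤ t →
      X₁ t ω = x₁ + (∫ s in (0:ℝ)..t, (if X₁ s ω ≤ X₂ s ω then g else -h)) + I₁ t ω ∧
      X₂ t ω = x₂ + (∫ s in (0:ℝ)..t, (if X₁ s ω ≤ X₂ s ω then -h else g)) + I₂ t ω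

/-- `(X₁, X₂)` solves the system (4.9)-(4.10), driven by the single Brownian motion `V`. -/
def Solves49 (μ : Measure Ω) (F : ℝ → MeasurableSpace Ω) (g h x₁ x₂ : ℝ)
    (V X₁ X₂ : ℝ → Ω → ℝ) : Prop :=
  (∀ t : ℝ, 0 ≤ t →
    MeasurableSpace.comap (fun ω => (X₁ t ω, X₂ t ω)) inferInstance ≤ F t) ∧
  (∀ᵐ ω ∂μ, Continuous (fun t => X₁ t ω) ∧ Continuous (fun t => X₂ t ω)) ∧
  ∃ I₁ I₂ : ℝ → Ω → ℝ,
    IsSI μ (fun s ω => if X₁ s ω ≤ X₂ s ω then (0:ℝ) else 1) V I₁ ∧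
    IsSI μ (fun s ω => if X₁ s ω ≤ X₂ s ω then (1:ℝ) else 0) V I₂ ∧
    ∀ᵐ ω ∂μ, ∀ t : ℝ, 0 ≤ t →
      X₁ t ω = x₁ + (∫ s in (0:ℝ)..t, (if X₁ s ω ≤ X₂ s ω then g else -h)) + I₁ t ω ∧
      X₂ t ω = x₂ + (∫ s in (0:ℝ)..t, (if X₁ s ω ≤ X₂ s ω then -h else g)) + I₂ t ω

/-- `(X₁, X₂)` solves the system (2.12)-(2.13), driven by the planar BM `(W₁, W₂)`. -/
def Solves212 (μ : Measure Ω) (F : ℝ → MeasurableSpace Ω) (g h ρ σ x₁ x₂ : ℝ)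
    (W₁ W₂ X₁ X₂ : ℝ → Ω → ℝ) : Prop :=
  (∀ t : ℝ, 0 ≤ t →
    MeasurableSpace.comap (fun ω => (X₁ t ω, X₂ t ω)) inferInstance ≤ F t) ∧
  (∀ᵐ ω ∂μ, Continuous (fun t => X₁ t ω) ∧ Continuous (fun t => X₂ t ω)) ∧
  ∃ I₁ I₂ : ℝ → Ω → ℝ,
    IsSI2 μ (fun s ω => if X₁ s ω ≤ X₂ s ω then 0 else ρ) W₁
            (fun s ω => if X₁ s ω ≤ X₂ s ω then σ else 0) W₂ I₁ ∧
    IsSI2 μ (fun s ω => if X₁ s ω ≤ X₂ s ω then -ρ else 0) W₁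
            (fun s ω => if X₁ s ω ≤ X₂ s ω then 0 else -σ) W₂ I₂ ∧
    ∀ᵐ ω ∂μ, ∀ t : ℝ, 0 ≤ t →
      X₁ t ω = x₁ + (∫ s in (0:ℝ)..t, (if X₁ s ω ≤ X₂ s ω then g else -h)) + I₁ t ω ∧
      X₂ t ω = x₂ + (∫ s in (0:ℝ)..t, (if X₁ s ω ≤ X₂ s ω then -h else g)) + I₂ t ω

/-- `(X₁, X₂)` solves the system (2.14)-(2.15), driven by the planar BM `(V₁, V₂)`. -/
def Solves214 (μ : Measure Ω) (F : ℝ → MeasurableSpace Ω) (g h ρ σ x₁ x₂ : ℝ)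
    (V₁ V₂ X₁ X₂ : ℝ → Ω → ℝ) : Prop :=
  (∀ t : ℝ, 0 ≤ t →
    MeasurableSpace.comap (fun ω => (X₁ t ω, X₂ t ω)) inferInstance ≤ F t) ∧
  (∀ᵐ ω ∂μ, Continuous (fun t => X₁ t ω) ∧ Continuous (fun t => X₂ t ω)) ∧
  ∃ I₁ I₂ : ℝ → Ω → ℝ,
    IsSI2 μ (fun s ω => if X₁ s ω ≤ X₂ s ω then 0 else ρ) V₁
            (fun s ω => if X₁ s ω ≤ X₂ s ω then σ else 0) V₂ I₁ ∧
    IsSI2 μ (fun s ω => if X₁ s ω ≤ X₂ s ω then ρ else 0) V₁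
            (fun s ω => if X₁ s ω ≤ X₂ s ω then 0 else σ) V₂ I₂ ∧
    ∀ᵐ ω ∂μ, ∀ t : ℝ, 0 ≤ t →
      X₁ t ω = x₁ + (∫ s in (0:ℝ)..t, (if X₁ s ω ≤ X₂ s ω then g else -h)) + I₁ t ω ∧
      X₂ t ω = x₂ + (∫ s in (0:ℝ)..t, (if X₁ s ω ≤ X₂ s ω then -h else g)) + I₂ t ω

/-- `(X₁, X₂)` solves the system `dX = Σ(X) dU + G(X) dt` of (eq:xSigma), where
`Σ(x) = Σ₊ 1{x₁ > x₂} + Σ₋ 1{x₁ ≤ x₂}`. -/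
def SolvesGen (μ : Measure Ω) (F : ℝ → MeasurableSpace Ω) (g h : ℝ)
    (Sp Sm : Matrix (Fin 2) (Fin 2) ℝ) (x₁ x₂ : ℝ)
    (U₁ U₂ X₁ X₂ : ℝ → Ω → ℝ) : Prop :=
  (∀ t : ℝ, 0 ≤ t →
    MeasurableSpace.comap (fun ω => (X₁ t ω, X₂ t ω)) inferInstance ≤ F t) ∧
  (∀ᵐ ω ∂μ, Continuous (fun t => X₁ t ω) ∧ Continuous (fun t => X₂ t ω)) ∧
  ∃ I₁ I₂ : ℝ → Ω → ℝ,
    IsSI2 μ (fun s ω => if X₁ s ω ≤ X₂ s ω then Sm 0 0 else Sp 0 0) U₁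
            (fun s ω => if X₁ s ω ≤ X₂ s ω then Sm 0 1 else Sp 0 1) U₂ I₁ ∧
    IsSI2 μ (fun s ω => if X₁ s ω ≤ X₂ s ω then Sm 1 0 else Sp 1 0) U₁
            (fun s ω => if X₁ s ω ≤ X₂ s ω then Sm 1 1 else Sp 1 1) U₂ I₂ ∧
    ∀ᵐ ω ∂μ, ∀ t : ℝ, 0 ≤ t →
      X₁ t ω = x₁ + (∫ s in (0:ℝ)..t, (if X₁ s ω ≤ X₂ s ω then g else -h)) + I₁ t ω ∧
      X₂ t ω = x₂ + (∫ s in (0:ℝ)..t, (if X₁ s ω ≤ X₂ s ω then -h else g)) + I₂ t ω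


/-- Cubic Taylor bound for `exp (i x)`. -/
lemma taylor_bound (x : ℝ) :
    ‖Complex.exp (Complex.I * x) - (1 + Complex.I * x - x ^ 2 / 2)‖ ≤ 4 * |x| ^ 3 := by
  by_cases hx : |x| ≤ 1
  · have h := Complex.exp_bound (x := Complex.I * x) (by simpa using hx) (n := 3) (by norm_num)
    have e : ∑ m ∈ Finset.range 3, (Complex.I * x) ^ m / (m.factorial : ℂ)
        = 1 + Complex.I * x - x ^ 2 / 2 := by
      simp [Finset.sum_range_succ, mul_pow, Nat.factorial]
      ring
    rw [e] at h
    refine h.trans ?_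
    have : ‖Complex.I * (x:ℂ)‖ = |x| := by simp
    rw [this]
    have h3 : 0 ≤ |x| ^ 3 := by positivity
    norm_num [Nat.factorial]
    linarith
  · push Not at hx
    have h1 : ‖Complex.exp (Complex.I * x)‖ = 1 := Complex.norm_exp_I_mul_ofReal x
    have h2 : ‖(1:ℂ) + Complex.I * x - x ^ 2 / 2‖ ≤ 1 + |x| + |x| ^ 2 / 2 := by
      refine (norm_sub_le _ _).trans ?_
      refine add_le_add ((norm_add_le _ _).trans (by simp)) (by simp)
    refine (norm_sub_le _ _).trans ?_
    have : 0 < |x| := by linarith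
    nlinarith [mul_pos this this, mul_pos (mul_pos this this) this, pow_two |x|]

/-- The third absolute moment of the standard Gaussian. -/
def kap : ℝ := ∫ x, |x| ^ 3 ∂(gaussianReal 0 1)

lemma kap_nonneg : 0 ≤ kap := integral_nonneg fun x => by positivity

lemma gauss_integrable_pow (v : NNReal) (k : ℕ) :
    Integrable (fun x : ℝ => |x| ^ k) (gaussianReal 0 v) := by
  have := (memLp_id_gaussianReal (μ := 0) (v := v) (k : NNReal)).integrable_norm_pow'
  simpa using this

lemma gauss_third (v : NNReal) :
    ∫ x, |x| ^ 3 ∂(gaussianReal 0 v) = (Real.sqrt v) ^ 3 * kap := by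
  have h : gaussianReal 0 v = (gaussianReal 0 1).map (fun x => Real.sqrt v * x) := by
    rw [gaussianReal_map_const_mul]
    congr 1
    · simp
    · ext; simp [Real.sq_sqrt]
  rw [h, integral_map (by fun_prop) (by fun_prop), kap, ← integral_const_mul]
  congr 1
  ext x
  rw [abs_mul, abs_of_nonneg (Real.sqrt_nonneg _), mul_pow]

lemma gauss_second (v : NNReal) : ∫ x, x ^ 2 ∂(gaussianReal 0 v) = v := by
  have h := variance_fun_id_gaussianReal (μ := 0) (v := v)
  rw [variance_eq_integral (by fun_prop)] at h
  simpa using h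

section
set_option linter.unusedSectionVars false
variable {μ : Measure Ω} [IsProbabilityMeasure μ]
  {F : ℝ → MeasurableSpace Ω} {W : ℝ → Ω → ℝ}

lemma IsBM.meas_F (hW : IsBM μ F W) {s t : ℝ} (hs : 0 ≤ s) (hst : s ≤ t) :
    Measurable[F t] (W s) :=
  (comap_measurable (W s)).mono ((hW.adapted s hs).trans (hW.mono hst)) le_rfl

lemma IsBM.meas (hW : IsBM μ F W) {s : ℝ} (hs : 0 ≤ s) : Measurable (W s) :=
  (hW.meas_F hs le_rfl).mono (hW.le s) le_rfl

lemma IsBM.int_pow (hW : IsBM μ F W) {s t : ℝ} (hs : 0 ≤ s) (hst : s ≤ t) (k : ℕ) :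
    Integrable (fun ω => |W t ω - W s ω| ^ k) μ := by
  have hm : Measurable (fun ω => W t ω - W s ω) := (hW.meas (hs.trans hst)).sub (hW.meas hs)
  have := gauss_integrable_pow (t - s).toNNReal k
  rw [← hW.law s t hs hst] at this
  exact this.comp_measurable hm

lemma IsBM.int_fun (hW : IsBM μ F W) {s t : ℝ} (hs : 0 ≤ s) (hst : s ≤ t)
    {φ : ℝ → ℝ} (hφ : Measurable φ) :
    ∫ ω, φ (W t ω - W s ω) ∂μ = ∫ x, φ x ∂(gaussianReal 0 (t - s).toNNReal) := by
  have hm : Measurable (fun ω => W t ω - W s ω) := (hW.meas (hs.trans hst)).sub (hW.meas hs)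
  rw [← hW.law s t hs hst, integral_map hm.aemeasurable hφ.aestronglyMeasurable]

lemma IsBM.mean (hW : IsBM μ F W) {s t : ℝ} (hs : 0 ≤ s) (hst : s ≤ t) :
    ∫ ω, (W t ω - W s ω) ∂μ = 0 := by
  rw [hW.int_fun hs hst (φ := fun x => x) measurable_id, integral_id_gaussianReal]

lemma IsBM.second (hW : IsBM μ F W) {s t : ℝ} (hs : 0 ≤ s) (hst : s ≤ t) :
    ∫ ω, (W t ω - W s ω) ^ 2 ∂μ = t - s := by
  rw [hW.int_fun hs hst (φ := fun x => x ^ 2) (by fun_prop), gauss_second]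
  simp [hst]

lemma IsBM.third (hW : IsBM μ F W) {s t : ℝ} (hs : 0 ≤ s) (hst : s ≤ t) :
    ∫ ω, |W t ω - W s ω| ^ 3 ∂μ = Real.sqrt (t - s) ^ 3 * kap := by
  rw [hW.int_fun hs hst (φ := fun x => |x| ^ 3) (by fun_prop), gauss_third]
  simp [hst]

/-- Integration of a past-measurable factor against a function of a Brownian increment. -/
lemma IsBM.integral_indep (hW : IsBM μ F W) {s t : ℝ} (hs : 0 ≤ s) (hst : s ≤ t)
    {η : Ω → ℂ} (hη : Measurable[F s] η) {φ : ℝ → ℝ} (hφ : Measurable φ) :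
    ∫ ω, η ω * (φ (W t ω - W s ω) : ℂ) ∂μ
      = (∫ ω, η ω ∂μ) * ((∫ ω, φ (W t ω - W s ω) ∂μ : ℝ) : ℂ) := by
  have hm : Measurable (fun ω => W t ω - W s ω) := (hW.meas (hs.trans hst)).sub (hW.meas hs)
  have hind : IndepFun η (fun ω => (φ (W t ω - W s ω) : ℂ)) μ := by
    have h1 : Indep (MeasurableSpace.comap η inferInstance)
        (MeasurableSpace.comap (fun ω => W t ω - W s ω) inferInstance) μ :=
      indep_of_indep_of_le_left (hW.indep s t hs hst).symm hη.comap_le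
    have h2 : IndepFun η (fun ω => W t ω - W s ω) μ := h1
    exact h2.comp (φ := id) (ψ := fun x => (φ x : ℂ)) measurable_id (by fun_prop)
  rw [hind.integral_fun_mul_eq_mul_integral
    (hη.mono (hW.le s) le_rfl).aestronglyMeasurable
    (by exact (Complex.measurable_ofReal.comp (hφ.comp hm)).aestronglyMeasurable),
    integral_complex_ofReal]

end
section
set_option linter.unusedSectionVars false
variable {μ : Measure Ω} [IsProbabilityMeasure μ]
  {F : ℝ → MeasurableSpace Ω} {W B₁ B₂ : ℝ → Ω → ℝ}

lemma IsBM.memLp (hW : IsBM μ F W) {s t : ℝ} (hs : 0 ≤ s) (hst : s ≤ t) :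
    MemLp (fun ω => W t ω - W s ω) 2 μ := by
  have hm : Measurable (fun ω => W t ω - W s ω) := (hW.meas (hs.trans hst)).sub (hW.meas hs)
  rw [memLp_two_iff_integrable_sq hm.aestronglyMeasurable]
  simpa using hW.int_pow hs hst 2

lemma IsBM.int_mul (hW : IsBM μ F W) {s t s' t' : ℝ} (hs : 0 ≤ s) (hst : s ≤ t)
    (hs' : 0 ≤ s') (hst' : s' ≤ t') :
    Integrable (fun ω => (W t ω - W s ω) * (W t' ω - W s' ω)) μ :=
  (hW.memLp hs hst).integrable_mul (hW.memLp hs' hst')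

lemma IsBM.orth (hW : IsBM μ F W) {s t s' t' : ℝ} (hs : 0 ≤ s) (hst : s ≤ t)
    (hts' : t ≤ s') (hst' : s' ≤ t') :
    ∫ ω, (W t ω - W s ω) * (W t' ω - W s' ω) ∂μ = 0 := by
  have h0 : 0 ≤ s' := (hs.trans hst).trans hts'
  have hη : Measurable[F s'] (fun ω => ((W t ω - W s ω : ℝ) : ℂ)) :=
    Complex.measurable_ofReal.comp
      ((hW.meas_F (hs.trans hst) hts').sub (hW.meas_F hs (hst.trans hts')))
  have h := hW.integral_indep h0 hst' hη (φ := fun x => x) measurable_id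
  rw [hW.mean h0 hst'] at h
  have e : (fun ω => ((W t ω - W s ω : ℝ) : ℂ) * ((W t' ω - W s' ω : ℝ) : ℂ))
      = fun ω => (((W t ω - W s ω) * (W t' ω - W s' ω) : ℝ) : ℂ) := by
    ext ω; push_cast; ring
  rw [e, integral_complex_ofReal] at h
  simpa using h

lemma planar_prod (hBM : IsPlanarBM μ F B₁ B₂) {a b c d : ℝ}
    (ha : 0 ≤ a) (hab : a ≤ b) (hc : 0 ≤ c) (hcd : c ≤ d) :
    Integrable (fun ω => ((B₁ b ω - B₁ a ω) * (B₁ d ω - B₁ c ω)) *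
      ((B₂ b ω - B₂ a ω) * (B₂ d ω - B₂ c ω))) μ ∧
    ∫ ω, ((B₁ b ω - B₁ a ω) * (B₁ d ω - B₁ c ω)) *
      ((B₂ b ω - B₂ a ω) * (B₂ d ω - B₂ c ω)) ∂μ =
    (∫ ω, (B₁ b ω - B₁ a ω) * (B₁ d ω - B₁ c ω) ∂μ) *
      ∫ ω, (B₂ b ω - B₂ a ω) * (B₂ d ω - B₂ c ω) ∂μ := by
  obtain ⟨h1, h2, hi⟩ := hBM
  have hm : Measurable (fun p : ℝ → ℝ => (p b - p a) * (p d - p c)) := by fun_prop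
  have hind : IndepFun (fun ω => (B₁ b ω - B₁ a ω) * (B₁ d ω - B₁ c ω))
      (fun ω => (B₂ b ω - B₂ a ω) * (B₂ d ω - B₂ c ω)) μ := hi.comp hm hm
  have i1 := h1.int_mul ha hab hc hcd
  have i2 := h2.int_mul ha hab hc hcd
  exact ⟨hind.integrable_mul i1 i2,
    hind.integral_fun_mul_eq_mul_integral i1.aestronglyMeasurable i2.aestronglyMeasurable⟩

/-- Second moment of the approximating cross-variation. -/
lemma diag_second (hBM : IsPlanarBM μ F B₁ B₂) {s d : ℝ} (hs : 0 ≤ s) (hd : 0 ≤ d) (n : ℕ)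
    (u : ℕ → ℝ) (hu : u = fun k : ℕ => s + k * d) :
    Integrable (fun ω => (∑ k ∈ Finset.range n,
      (B₁ (u (k+1)) ω - B₁ (u k) ω) * (B₂ (u (k+1)) ω - B₂ (u k) ω)) ^ 2) μ ∧
    ∫ ω, (∑ k ∈ Finset.range n,
      (B₁ (u (k+1)) ω - B₁ (u k) ω) * (B₂ (u (k+1)) ω - B₂ (u k) ω)) ^ 2 ∂μ = n * d ^ 2 := by
  have hu0 : ∀ k, 0 ≤ u k := fun k => by rw [hu]; positivity
  have hmono : Monotone u := by
    rw [hu]; intro i j hij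
    have : (i:ℝ) ≤ j := by exact_mod_cast hij
    simp only; gcongr
  have hstep : ∀ k, u k ≤ u (k+1) := fun k => hmono (Nat.le_succ k)
  have hdiff : ∀ k, u (k+1) - u k = d := fun k => by rw [hu]; push_cast; ring
  have e : (fun ω => (∑ k ∈ Finset.range n,
      (B₁ (u (k+1)) ω - B₁ (u k) ω) * (B₂ (u (k+1)) ω - B₂ (u k) ω)) ^ 2)
      = fun ω => ∑ j ∈ Finset.range n, ∑ k ∈ Finset.range n,
        ((B₁ (u (j+1)) ω - B₁ (u j) ω) * (B₁ (u (k+1)) ω - B₁ (u k) ω)) *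
        ((B₂ (u (j+1)) ω - B₂ (u j) ω) * (B₂ (u (k+1)) ω - B₂ (u k) ω)) := by
    ext ω
    rw [pow_two, Finset.sum_mul_sum]
    refine Finset.sum_congr rfl fun j _ => Finset.sum_congr rfl fun k _ => by ring
  have hp := fun j k => planar_prod hBM (hu0 j) (hstep j) (hu0 k) (hstep k)
  rw [e]
  refine ⟨integrable_finsetSum _ fun j _ => integrable_finsetSum _ fun k _ => (hp j k).1, ?_⟩
  rw [integral_finsetSum _ fun j _ => integrable_finsetSum _ fun k _ => (hp j k).1]
  have hj : ∀ j ∈ Finset.range n, ∫ ω, ∑ k ∈ Finset.range n,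
        ((B₁ (u (j+1)) ω - B₁ (u j) ω) * (B₁ (u (k+1)) ω - B₁ (u k) ω)) *
        ((B₂ (u (j+1)) ω - B₂ (u j) ω) * (B₂ (u (k+1)) ω - B₂ (u k) ω)) ∂μ = d ^ 2 := by
    intro j hj
    rw [integral_finsetSum _ fun k _ => (hp j k).1, Finset.sum_eq_single j]
    · rw [(hp j j).2]
      have h1 := hBM.1.second (hu0 j) (hstep j)
      have h2 := hBM.2.1.second (hu0 j) (hstep j)
      simp only [pow_two] at h1 h2
      rw [h1, h2, hdiff]; ring
    · intro k _ hkj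
      rw [(hp j k).2]
      rcases lt_or_gt_of_ne hkj with h | h
      · have := hBM.1.orth (hu0 k) (hstep k) (hmono (Nat.succ_le_of_lt h)) (hstep j)
        simp_rw [mul_comm (B₁ (u (j+1)) _ - B₁ (u j) _)]
        rw [this, zero_mul]
      · rw [hBM.1.orth (hu0 j) (hstep j) (hmono (Nat.succ_le_of_lt h)) (hstep k), zero_mul]
    · intro h; exact absurd hj h
  rw [Finset.sum_congr rfl hj]
  simp

/-- The two driving motions have orthogonal increments conditionally on the past. -/
lemma cross_zero (hBM : IsPlanarBM μ F B₁ B₂) {s t : ℝ} (hs : 0 ≤ s) (hst : s ≤ t)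
    {η : Ω → ℂ} (hη : Measurable[F s] η) {K : ℝ} (hK : ∀ ω, ‖η ω‖ ≤ K) :
    Integrable (fun ω => η ω * (((B₁ t ω - B₁ s ω) * (B₂ t ω - B₂ s ω) : ℝ) : ℂ)) μ ∧
    ∫ ω, η ω * (((B₁ t ω - B₁ s ω) * (B₂ t ω - B₂ s ω) : ℝ) : ℂ) ∂μ = 0 := by
  have hηm : Measurable η := hη.mono (hBM.1.le s) le_rfl
  have hIntg : ∀ {a b c d : ℝ}, 0 ≤ a → a ≤ b → 0 ≤ c → c ≤ d →
      Integrable (fun ω => η ω * (((B₁ b ω - B₁ a ω) * (B₂ d ω - B₂ c ω) : ℝ) : ℂ)) μ := by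
    intro a b c d ha hab hc hcd
    have h : Integrable (fun ω => (B₁ b ω - B₁ a ω) * (B₂ d ω - B₂ c ω)) μ :=
      (hBM.1.memLp ha hab).integrable_mul (hBM.2.1.memLp hc hcd)
    exact h.ofReal.bdd_mul (c := K) hηm.aestronglyMeasurable (Eventually.of_forall hK)
  refine ⟨hIntg hs hst hs hst, ?_⟩
  have hK0 : 0 ≤ K := by
    have : Nonempty Ω := nonempty_of_isProbabilityMeasure μ
    exact (norm_nonneg _).trans (hK (Classical.arbitrary Ω))
  -- main estimate
  have key : ∀ n : ℕ, 0 < n → ∀ ε : ℝ, 0 < ε →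
      ‖∫ ω, η ω * (((B₁ t ω - B₁ s ω) * (B₂ t ω - B₂ s ω) : ℝ) : ℂ) ∂μ‖
        ≤ K * (ε + ((t - s) ^ 2 / n) / ε) := by
    intro n hn ε hε
    set d := (t - s) / n with hd
    have hn' : (0:ℝ) < n := by exact_mod_cast hn
    have hd0 : 0 ≤ d := div_nonneg (by linarith) hn'.le
    obtain ⟨u, hu⟩ : ∃ u : ℕ → ℝ, u = fun k : ℕ => s + k * d := ⟨_, rfl⟩
    have hu0 : ∀ k, s ≤ u k := fun k => by rw [hu]; simp only; nlinarith [mul_nonneg (Nat.cast_nonneg (α := ℝ) k) hd0]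
    have hstep : ∀ k, u k ≤ u (k+1) := fun k => by
      rw [hu]; push_cast; linarith
    have hus : u 0 = s := by rw [hu]; simp
    have hun : u n = t := by rw [hu, hd]; field_simp; ring
    set S : Ω → ℝ := fun ω => ∑ k ∈ Finset.range n,
      (B₁ (u (k+1)) ω - B₁ (u k) ω) * (B₂ (u (k+1)) ω - B₂ (u k) ω) with hS
    have hdec : ∀ N : ℕ, ∀ ω, (B₁ (u N) ω - B₁ s ω) * (B₂ (u N) ω - B₂ s ω)
        = ∑ k ∈ Finset.range N, ((B₁ (u k) ω - B₁ s ω) * (B₂ (u (k+1)) ω - B₂ (u k) ω)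
          + (B₁ (u (k+1)) ω - B₁ (u k) ω) * (B₂ (u k) ω - B₂ s ω)
          + (B₁ (u (k+1)) ω - B₁ (u k) ω) * (B₂ (u (k+1)) ω - B₂ (u k) ω)) := by
      intro N ω
      induction N with
      | zero => simp [hus]
      | succ N ih => rw [Finset.sum_range_succ, ← ih]; ring
    have hk0 : ∀ k, 0 ≤ u k := fun k => hs.trans (hu0 k)
    have hA : ∀ k, ∫ ω, η ω * (((B₁ (u k) ω - B₁ s ω) * (B₂ (u (k+1)) ω - B₂ (u k) ω) : ℝ) : ℂ) ∂μ
        = 0 := by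
      intro k
      have hη' : Measurable[F (u k)] (fun ω => η ω * ((B₁ (u k) ω - B₁ s ω : ℝ) : ℂ)) :=
        (hη.mono (hBM.1.mono (hu0 k)) le_rfl).mul (Complex.measurable_ofReal.comp
          ((hBM.1.meas_F (hk0 k) le_rfl).sub (hBM.1.meas_F hs (hu0 k))))
      have h := hBM.2.1.integral_indep (hk0 k) (hstep k) hη' (φ := fun x => x) measurable_id
      rw [hBM.2.1.mean (hk0 k) (hstep k)] at h
      rw [← show _ = (0:ℂ) from h.trans (by simp)]
      congr 1; ext ω; push_cast; ring
    have hB : ∀ k, ∫ ω, η ω * (((B₁ (u (k+1)) ω - B₁ (u k) ω) * (B₂ (u k) ω - B₂ s ω) : ℝ) : ℂ) ∂μ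
        = 0 := by
      intro k
      have hη' : Measurable[F (u k)] (fun ω => η ω * ((B₂ (u k) ω - B₂ s ω : ℝ) : ℂ)) :=
        (hη.mono (hBM.1.mono (hu0 k)) le_rfl).mul (Complex.measurable_ofReal.comp
          ((hBM.2.1.meas_F (hk0 k) le_rfl).sub (hBM.2.1.meas_F hs (hu0 k))))
      have h := hBM.1.integral_indep (hk0 k) (hstep k) hη' (φ := fun x => x) measurable_id
      rw [hBM.1.mean (hk0 k) (hstep k)] at h
      rw [← show _ = (0:ℂ) from h.trans (by simp)]
      congr 1; ext ω; push_cast; ring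
    have hiA := fun k => hIntg hs (hu0 k) (hk0 k) (hstep k)
    have hiB := fun k => hIntg (hk0 k) (hstep k) hs (hu0 k)
    have hiC := fun k => hIntg (hk0 k) (hstep k) (hk0 k) (hstep k)
    have hred : ∫ ω, η ω * (((B₁ t ω - B₁ s ω) * (B₂ t ω - B₂ s ω) : ℝ) : ℂ) ∂μ
        = ∫ ω, η ω * (S ω : ℂ) ∂μ := by
      have e1 : (fun ω => η ω * (((B₁ t ω - B₁ s ω) * (B₂ t ω - B₂ s ω) : ℝ) : ℂ))
        = fun ω => ∑ k ∈ Finset.range n,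
          (η ω * (((B₁ (u k) ω - B₁ s ω) * (B₂ (u (k+1)) ω - B₂ (u k) ω) : ℝ) : ℂ)
          + η ω * (((B₁ (u (k+1)) ω - B₁ (u k) ω) * (B₂ (u k) ω - B₂ s ω) : ℝ) : ℂ)
          + η ω * (((B₁ (u (k+1)) ω - B₁ (u k) ω) * (B₂ (u (k+1)) ω - B₂ (u k) ω) : ℝ) : ℂ)) := by
        ext ω
        have := hdec n ω
        rw [hun] at this
        rw [this, Complex.ofReal_sum, Finset.mul_sum]
        refine Finset.sum_congr rfl fun k _ => by push_cast; ring
      have e2 : (fun ω => η ω * (S ω : ℂ)) = fun ω => ∑ k ∈ Finset.range n,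
          η ω * (((B₁ (u (k+1)) ω - B₁ (u k) ω) * (B₂ (u (k+1)) ω - B₂ (u k) ω) : ℝ) : ℂ) := by
        ext ω
        simp only [hS]
        rw [Complex.ofReal_sum, Finset.mul_sum]
      rw [e1, e2, integral_finsetSum _ fun k _ => ((hiA k).fun_add (hiB k)).fun_add (hiC k),
        integral_finsetSum _ fun k _ => hiC k]
      refine Finset.sum_congr rfl fun k _ => ?_
      have h1 := integral_add ((hiA k).fun_add (hiB k)) (hiC k)
      have h2 := integral_add (hiA k) (hiB k)
      rw [h1, h2, hA, hB]; simp
    rw [hred]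
    obtain ⟨hSi, hSe⟩ := diag_second hBM hs hd0 n u hu
    have hbound : ∀ ω, ‖η ω * (S ω : ℂ)‖ ≤ K * (ε + S ω ^ 2 / ε) := by
      intro ω
      rw [norm_mul, Complex.norm_real, Real.norm_eq_abs]
      refine mul_le_mul (hK ω) ?_ (abs_nonneg _) hK0
      have : |S ω| * ε ≤ ε * ε + S ω ^ 2 := by
        rw [← sq_abs (S ω)]; nlinarith [sq_nonneg (|S ω| - ε), abs_nonneg (S ω)]
      calc |S ω| ≤ (ε * ε + S ω ^ 2) / ε := by rwa [le_div_iff₀ hε]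
        _ = _ := by field_simp
    refine (norm_integral_le_of_norm_le (g := fun ω => K * (ε + S ω ^ 2 / ε))
      (((integrable_const _).add (hSi.div_const _)).const_mul _)
      (Eventually.of_forall hbound)).trans ?_
    rw [integral_const_mul, integral_add (integrable_const _) (hSi.div_const _), integral_div, hSe]
    have : (n:ℝ) * d ^ 2 = (t - s) ^ 2 / n := by rw [hd]; field_simp
    rw [this]; simp
  have : ‖∫ ω, η ω * (((B₁ t ω - B₁ s ω) * (B₂ t ω - B₂ s ω) : ℝ) : ℂ) ∂μ‖ ≤ 0 := by
    have h1 : ∀ ε : ℝ, 0 < ε →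
      ‖∫ ω, η ω * (((B₁ t ω - B₁ s ω) * (B₂ t ω - B₂ s ω) : ℝ) : ℂ) ∂μ‖ ≤ K * (ε + 0 / ε) := by
      intro ε hε
      refine ge_of_tendsto (((tendsto_const_nhds.add
        ((tendsto_const_div_atTop_nhds_zero_nat ((t-s)^2)).div_const ε))).const_mul K)
        ((eventually_gt_atTop 0).mono fun n hn => key n hn ε hε)
    have h2 : Tendsto (fun ε : ℝ => K * (ε + 0 / ε)) (nhdsWithin 0 (Ioi 0)) (nhds 0) := by
      have : Tendsto (fun ε : ℝ => K * ε) (nhds 0) (nhds (K * 0)) := tendsto_id.const_mul K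
      simpa using this.mono_left nhdsWithin_le_nhds
    exact ge_of_tendsto h2 (eventually_mem_nhdsWithin.mono fun ε hε => h1 ε hε)
  exact norm_le_zero_iff.mp this

end
section
set_option linter.unusedSectionVars false
variable {μ : Measure Ω} [IsProbabilityMeasure μ]
  {F : ℝ → MeasurableSpace Ω} {W B₁ B₂ : ℝ → Ω → ℝ}

lemma IsBM.integral_zero (hW : IsBM μ F W) {s t : ℝ} (hs : 0 ≤ s) (hst : s ≤ t)
    {η : Ω → ℂ} (hη : Measurable[F s] η) {K : ℝ} (hK : ∀ ω, ‖η ω‖ ≤ K)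
    {φ : ℝ → ℝ} (hφ : Measurable φ) (hi : Integrable (fun ω => φ (W t ω - W s ω)) μ)
    (h0 : ∫ ω, φ (W t ω - W s ω) ∂μ = 0) :
    Integrable (fun ω => η ω * (φ (W t ω - W s ω) : ℂ)) μ ∧
    ∫ ω, η ω * (φ (W t ω - W s ω) : ℂ) ∂μ = 0 := by
  refine ⟨hi.ofReal.bdd_mul (c := K) (hη.mono (hW.le s) le_rfl).aestronglyMeasurable
    (Eventually.of_forall hK), ?_⟩
  rw [hW.integral_indep hs hst hη hφ, h0]; simp

lemma IsBM.lin_zero (hW : IsBM μ F W) {s t : ℝ} (hs : 0 ≤ s) (hst : s ≤ t)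
    {η : Ω → ℂ} (hη : Measurable[F s] η) {K : ℝ} (hK : ∀ ω, ‖η ω‖ ≤ K) :
    Integrable (fun ω => η ω * ((W t ω - W s ω : ℝ) : ℂ)) μ ∧
    ∫ ω, η ω * ((W t ω - W s ω : ℝ) : ℂ) ∂μ = 0 :=
  hW.integral_zero hs hst hη hK (φ := fun x => x) measurable_id
    ((hW.memLp hs hst).integrable (by norm_num)) (hW.mean hs hst)

lemma IsBM.sq_zero (hW : IsBM μ F W) {s t : ℝ} (hs : 0 ≤ s) (hst : s ≤ t)
    {η : Ω → ℂ} (hη : Measurable[F s] η) {K : ℝ} (hK : ∀ ω, ‖η ω‖ ≤ K) :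
    Integrable (fun ω => η ω * (((W t ω - W s ω) ^ 2 - (t - s) : ℝ) : ℂ)) μ ∧
    ∫ ω, η ω * (((W t ω - W s ω) ^ 2 - (t - s) : ℝ) : ℂ) ∂μ = 0 := by
  have h2 : Integrable (fun ω => (W t ω - W s ω) ^ 2) μ := (hW.memLp hs hst).integrable_sq
  refine hW.integral_zero hs hst hη hK (φ := fun x => x ^ 2 - (t - s)) (by fun_prop)
    (h2.sub (integrable_const _)) ?_
  rw [integral_sub h2 (integrable_const _), hW.second hs hst]; simp

/-- One-step estimate for the conditional characteristic function. -/
lemma step (hBM : IsPlanarBM μ F B₁ B₂) {s t : ℝ} (hs : 0 ≤ s) (hst : s ≤ t)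
    {ξ : Ω → ℂ} (hξ : Measurable[F s] ξ) (hξ1 : ∀ ω, ‖ξ ω‖ ≤ 1)
    {a b : Ω → ℝ} (ha : Measurable[F s] a) (hb : Measurable[F s] b)
    (hab : ∀ ω, a ω ^ 2 + b ω ^ 2 = 1) (θ : ℝ) :
    ‖∫ ω, ξ ω * Complex.exp (Complex.I *
        ((θ * (a ω * (B₁ t ω - B₁ s ω) - b ω * (B₂ t ω - B₂ s ω)) : ℝ) : ℂ)) ∂μ
      - ((1 - θ ^ 2 / 2 * (t - s) : ℝ) : ℂ) * ∫ ω, ξ ω ∂μ‖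
      ≤ 32 * |θ| ^ 3 * kap * Real.sqrt (t - s) ^ 3 := by
  have h1 := hBM.1
  have h2 := hBM.2.1
  have ha1 : ∀ ω, |a ω| ≤ 1 := fun ω => by
    rw [← sq_le_one_iff_abs_le_one]; nlinarith [hab ω, sq_nonneg (b ω)]
  have hb1 : ∀ ω, |b ω| ≤ 1 := fun ω => by
    rw [← sq_le_one_iff_abs_le_one]; nlinarith [hab ω, sq_nonneg (a ω)]
  have hac : Measurable[F s] (fun ω => (a ω : ℂ)) := Complex.measurable_ofReal.comp ha
  have hbc : Measurable[F s] (fun ω => (b ω : ℂ)) := Complex.measurable_ofReal.comp hb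
  have hξm : Measurable ξ := hξ.mono (h1.le s) le_rfl
  have ham : Measurable a := ha.mono (h1.le s) le_rfl
  have hbm : Measurable b := hb.mono (h1.le s) le_rfl
  have hd1 : Measurable (fun ω => B₁ t ω - B₁ s ω) := (h1.meas (hs.trans hst)).sub (h1.meas hs)
  have hd2 : Measurable (fun ω => B₂ t ω - B₂ s ω) := (h2.meas (hs.trans hst)).sub (h2.meas hs)
  set X : Ω → ℝ := fun ω => a ω * (B₁ t ω - B₁ s ω) - b ω * (B₂ t ω - B₂ s ω) with hX
  have hXm : Measurable X := (ham.mul hd1).sub (hbm.mul hd2)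
  have nb : ∀ (c : ℂ) (f : Ω → ℝ), (∀ ω, |f ω| ≤ 1) → ∀ ω, ‖c * (ξ ω * (f ω : ℂ))‖ ≤ ‖c‖ := by
    intro c f hf ω
    rw [norm_mul, norm_mul, Complex.norm_real, Real.norm_eq_abs]
    have : ‖ξ ω‖ * |f ω| ≤ 1 := mul_le_one₀ (hξ1 ω) (abs_nonneg _) (hf ω)
    nlinarith [norm_nonneg c]
  have meas : ∀ (c : ℂ) (f : Ω → ℝ), Measurable[F s] f →
      Measurable[F s] (fun ω => c * (ξ ω * (f ω : ℂ))) := by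
    intro c f hf
    exact (hξ.mul (Complex.measurable_ofReal.comp hf)).const_mul c
  obtain ⟨i1, z1⟩ := h1.lin_zero hs hst (meas (Complex.I * θ) a ha) (nb _ a ha1)
  obtain ⟨i2, z2⟩ := h2.lin_zero hs hst (meas (-(Complex.I * θ)) b hb) (nb _ b hb1)
  obtain ⟨i3, z3⟩ := h1.sq_zero hs hst (meas (-(θ ^ 2 / 2)) (fun ω => a ω ^ 2) (ha.pow_const 2))
    (nb _ _ fun ω => by rw [abs_pow]; exact pow_le_one₀ (abs_nonneg _) (ha1 ω))
  obtain ⟨i4, z4⟩ := h2.sq_zero hs hst (meas (-(θ ^ 2 / 2)) (fun ω => b ω ^ 2) (hb.pow_const 2))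
    (nb _ _ fun ω => by rw [abs_pow]; exact pow_le_one₀ (abs_nonneg _) (hb1 ω))
  obtain ⟨i5, z5⟩ := cross_zero hBM hs hst (meas (θ ^ 2) (fun ω => a ω * b ω) (ha.mul hb))
    (nb _ _ fun ω => by rw [abs_mul]; exact mul_le_one₀ (ha1 ω) (abs_nonneg _) (hb1 ω))
  set R : Ω → ℂ := fun ω => ξ ω * (Complex.exp (Complex.I * ((θ * X ω : ℝ) : ℂ))
    - (1 + Complex.I * ((θ * X ω : ℝ) : ℂ) - ((θ * X ω : ℝ) : ℂ) ^ 2 / 2)) with hR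
  have hRb : ∀ ω, ‖R ω‖ ≤ 16 * |θ| ^ 3 *
      (|B₁ t ω - B₁ s ω| ^ 3 + |B₂ t ω - B₂ s ω| ^ 3) := by
    intro ω
    have hXb : |X ω| ≤ |B₁ t ω - B₁ s ω| + |B₂ t ω - B₂ s ω| := by
      refine (abs_sub _ _).trans ?_
      rw [abs_mul, abs_mul]
      exact add_le_add (mul_le_of_le_one_left (abs_nonneg _) (ha1 ω))
        (mul_le_of_le_one_left (abs_nonneg _) (hb1 ω))
    have hcube : ∀ p q : ℝ, 0 ≤ p → 0 ≤ q → (p + q) ^ 3 ≤ 4 * (p ^ 3 + q ^ 3) := by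
      intro p q hp hq
      nlinarith [mul_nonneg (add_nonneg hp hq) (sq_nonneg (p - q))]
    calc ‖R ω‖ ≤ 1 * (4 * |θ * X ω| ^ 3) := by
          rw [hR, norm_mul]
          exact mul_le_mul (hξ1 ω) (taylor_bound _) (norm_nonneg _) zero_le_one
      _ = 4 * |θ| ^ 3 * |X ω| ^ 3 := by rw [abs_mul]; ring
      _ ≤ 4 * |θ| ^ 3 * (4 * (|B₁ t ω - B₁ s ω| ^ 3 + |B₂ t ω - B₂ s ω| ^ 3)) := by
          refine mul_le_mul_of_nonneg_left ?_ (by positivity)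
          exact (pow_le_pow_left₀ (abs_nonneg _) hXb 3).trans
            (hcube _ _ (abs_nonneg _) (abs_nonneg _))
      _ = _ := by ring
  have hbi : Integrable (fun ω => 16 * |θ| ^ 3 *
      (|B₁ t ω - B₁ s ω| ^ 3 + |B₂ t ω - B₂ s ω| ^ 3)) μ :=
    ((h1.int_pow hs hst 3).add (h2.int_pow hs hst 3)).const_mul _
  have hRm : Measurable R := by
    have : Measurable fun ω => ((θ * X ω : ℝ) : ℂ) :=
      Complex.measurable_ofReal.comp (hXm.const_mul θ)
    fun_prop
  have iR : Integrable R μ := hbi.mono' hRm.aestronglyMeasurable (Eventually.of_forall hRb)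
  have hξi : Integrable ξ μ := (integrable_const (1:ℝ)).mono' hξm.aestronglyMeasurable
    (Eventually.of_forall hξ1)
  have hei : Integrable (fun ω => ξ ω * Complex.exp (Complex.I * ((θ * X ω : ℝ) : ℂ))) μ := by
    refine (integrable_const (1:ℝ)).mono' ?_ (Eventually.of_forall fun ω => ?_)
    · have : Measurable fun ω => ((θ * X ω : ℝ) : ℂ) :=
        Complex.measurable_ofReal.comp (hXm.const_mul θ)
      exact (by fun_prop : Measurable _).aestronglyMeasurable
    · rw [norm_mul, Complex.norm_exp_I_mul_ofReal, mul_one]; exact hξ1 ω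
  have hid : ∫ ω, (ξ ω * Complex.exp (Complex.I * ((θ * X ω : ℝ) : ℂ))
      - ((1 - θ ^ 2 / 2 * (t - s) : ℝ) : ℂ) * ξ ω) ∂μ = ∫ ω, R ω ∂μ := by
    have e : (fun ω => ξ ω * Complex.exp (Complex.I * ((θ * X ω : ℝ) : ℂ))
      - ((1 - θ ^ 2 / 2 * (t - s) : ℝ) : ℂ) * ξ ω) = fun ω =>
      (Complex.I * θ) * (ξ ω * (a ω : ℂ)) * ((B₁ t ω - B₁ s ω : ℝ) : ℂ)
      + (-(Complex.I * θ)) * (ξ ω * (b ω : ℂ)) * ((B₂ t ω - B₂ s ω : ℝ) : ℂ)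
      + (-((θ:ℂ) ^ 2 / 2)) * (ξ ω * ((a ω ^ 2 : ℝ) : ℂ)) * (((B₁ t ω - B₁ s ω) ^ 2 - (t - s) : ℝ) : ℂ)
      + (-((θ:ℂ) ^ 2 / 2)) * (ξ ω * ((b ω ^ 2 : ℝ) : ℂ)) * (((B₂ t ω - B₂ s ω) ^ 2 - (t - s) : ℝ) : ℂ)
      + ((θ:ℂ) ^ 2) * (ξ ω * ((a ω * b ω : ℝ) : ℂ)) *
        (((B₁ t ω - B₁ s ω) * (B₂ t ω - B₂ s ω) : ℝ) : ℂ)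
      + R ω := by
      ext ω
      have hc : (a ω : ℂ) ^ 2 + (b ω : ℂ) ^ 2 = 1 := by exact_mod_cast hab ω
      simp only [hR, hX]
      push_cast
      linear_combination (-(ξ ω) * θ ^ 2 / 2 * (t - s)) * hc
    rw [e]
    have j2 := i1.fun_add i2
    have j3 := j2.fun_add i3
    have j4 := j3.fun_add i4
    have j5 := j4.fun_add i5
    rw [integral_add j5 iR, integral_add j4 i5, integral_add j3 i4, integral_add j2 i3,
      integral_add i1 i2, z1, z2, z3, z4, z5]
    simp
  rw [integral_sub hei (hξi.const_mul _), integral_const_mul] at hid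
  rw [hid]
  refine (norm_integral_le_of_norm_le hbi (Eventually.of_forall hRb)).trans ?_
  rw [integral_const_mul, integral_add (h1.int_pow hs hst 3) (h2.int_pow hs hst 3),
    h1.third hs hst, h2.third hs hst]
  exact le_of_eq (by ring)

end
section
set_option linter.unusedSectionVars false
variable {μ : Measure Ω} [IsProbabilityMeasure μ]
  {F : ℝ → MeasurableSpace Ω} {W B₁ B₂ : ℝ → Ω → ℝ}

/-- Iterated one-step estimate. -/
lemma chain (hBM : IsPlanarBM μ F B₁ B₂) (u : ℕ → ℝ) (hu0 : ∀ k, 0 ≤ u k) {d : ℝ} (hd0 : 0 ≤ d)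
    (hd : ∀ k, u (k + 1) - u k = d) (H₁ H₂ : ℕ → Ω → ℝ)
    (hH₁ : ∀ k, Measurable[F (u k)] (H₁ k)) (hH₂ : ∀ k, Measurable[F (u k)] (H₂ k))
    (hH : ∀ k ω, H₁ k ω ^ 2 + H₂ k ω ^ 2 = 1) {V : Ω → ℝ} (hV : Measurable[F (u 0)] V)
    (θ : ℝ) (hq : 0 ≤ 1 - θ ^ 2 / 2 * d) (j : ℕ) :
    ‖∫ ω, Complex.exp (Complex.I * ((θ * (V ω + ∑ i ∈ Finset.range j,
      (H₁ i ω * (B₁ (u (i + 1)) ω - B₁ (u i) ω) - H₂ i ω * (B₂ (u (i + 1)) ω - B₂ (u i) ω)))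
        : ℝ) : ℂ)) ∂μ‖
      ≤ (1 - θ ^ 2 / 2 * d) ^ j + j * (32 * |θ| ^ 3 * kap * Real.sqrt d ^ 3) := by
  set q := 1 - θ ^ 2 / 2 * d with hqd
  set ε := 32 * |θ| ^ 3 * kap * Real.sqrt d ^ 3 with hε
  have hε0 : 0 ≤ ε := by have := kap_nonneg; positivity
  have hq1 : q ≤ 1 := by rw [hqd]; nlinarith [mul_nonneg (sq_nonneg θ) hd0]
  have hstep : ∀ k, u k ≤ u (k + 1) := fun k => by linarith [hd k]
  have hmono : Monotone u := monotone_nat_of_le_succ hstep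
  set S : ℕ → Ω → ℝ := fun j ω => V ω + ∑ i ∈ Finset.range j,
      (H₁ i ω * (B₁ (u (i + 1)) ω - B₁ (u i) ω) - H₂ i ω * (B₂ (u (i + 1)) ω - B₂ (u i) ω))
    with hS
  have hSs : ∀ j ω, S (j + 1) ω = S j ω + (H₁ j ω * (B₁ (u (j + 1)) ω - B₁ (u j) ω)
      - H₂ j ω * (B₂ (u (j + 1)) ω - B₂ (u j) ω)) := by
    intro j ω; simp only [hS, Finset.sum_range_succ]; ring
  have hSm : ∀ j, Measurable[F (u j)] (S j) := by
    intro j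
    induction j with
    | zero => simpa [hS] using hV
    | succ j ih =>
      have up : F (u j) ≤ F (u (j + 1)) := hBM.1.mono (hstep j)
      have e : S (j + 1) = fun ω => S j ω + (H₁ j ω * (B₁ (u (j + 1)) ω - B₁ (u j) ω)
        - H₂ j ω * (B₂ (u (j + 1)) ω - B₂ (u j) ω)) := funext (hSs j)
      rw [e]
      exact (ih.mono up le_rfl).add
        ((((hH₁ j).mono up le_rfl).mul
          ((hBM.1.meas_F (hu0 _) le_rfl).sub (hBM.1.meas_F (hu0 _) (hstep j)))).sub
        (((hH₂ j).mono up le_rfl).mul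
          ((hBM.2.1.meas_F (hu0 _) le_rfl).sub (hBM.2.1.meas_F (hu0 _) (hstep j)))))
  change ‖∫ ω, Complex.exp (Complex.I * ((θ * S j ω : ℝ) : ℂ)) ∂μ‖ ≤ q ^ j + j * ε
  induction j with
  | zero =>
    refine (norm_integral_le_of_norm_le (g := fun _ => (1:ℝ)) (integrable_const _)
      (Eventually.of_forall fun ω => ?_)).trans ?_
    · rw [Complex.norm_exp_I_mul_ofReal]
    · simp
  | succ j ih =>
    have hξ : Measurable[F (u j)] (fun ω => Complex.exp (Complex.I * ((θ * S j ω : ℝ) : ℂ))) := by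
      have h1 : Measurable (fun x : ℝ => Complex.exp (Complex.I * ((θ * x : ℝ) : ℂ))) := by
        fun_prop
      exact h1.comp (hSm j)
    have h := step hBM (hu0 j) (hstep j) hξ
      (fun ω => (Complex.norm_exp_I_mul_ofReal _).le) (hH₁ j) (hH₂ j) (hH j) θ
    rw [hd j] at h
    have e : ∀ ω, Complex.exp (Complex.I * ((θ * S j ω : ℝ) : ℂ)) * Complex.exp (Complex.I *
        ((θ * (H₁ j ω * (B₁ (u (j + 1)) ω - B₁ (u j) ω)
          - H₂ j ω * (B₂ (u (j + 1)) ω - B₂ (u j) ω)) : ℝ) : ℂ))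
        = Complex.exp (Complex.I * ((θ * S (j + 1) ω : ℝ) : ℂ)) := by
      intro ω
      rw [← Complex.exp_add, hSs]
      congr 1; push_cast; ring
    simp only [e] at h
    have h2 : ‖∫ ω, Complex.exp (Complex.I * ((θ * S (j + 1) ω : ℝ) : ℂ)) ∂μ‖
        ≤ ε + q * ‖∫ ω, Complex.exp (Complex.I * ((θ * S j ω : ℝ) : ℂ)) ∂μ‖ := by
      have h3 := norm_le_norm_add_norm_sub' (∫ ω, Complex.exp (Complex.I * ((θ * S (j + 1) ω : ℝ) : ℂ)) ∂μ)
        (((q:ℝ):ℂ) * ∫ ω, Complex.exp (Complex.I * ((θ * S j ω : ℝ) : ℂ)) ∂μ)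
      rw [norm_mul, Complex.norm_real, Real.norm_eq_abs, abs_of_nonneg hq] at h3
      linarith
    refine h2.trans ?_
    have h4 := mul_le_mul_of_nonneg_left ih hq
    have h5 : q * (j * ε) ≤ j * ε := mul_le_of_le_one_left (by positivity) hq1
    have hj1 : ((j + 1 : ℕ) : ℝ) = (j : ℝ) + 1 := by push_cast; ring
    rw [pow_succ, hj1]
    nlinarith

/-- Characteristic function bound for the limit. -/
lemma char_lim (hBM : IsPlanarBM μ F B₁ B₂) (H₁ H₂ : ℝ → Ω → ℝ)
    (hH₁ : ∀ t, 0 ≤ t → Measurable[F t] (H₁ t)) (hH₂ : ∀ t, 0 ≤ t → Measurable[F t] (H₂ t))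
    (hH : ∀ t ω, H₁ t ω ^ 2 + H₂ t ω ^ 2 = 1) {T s : ℝ} (hT : 0 < T) (m : ℕ)
    (hs : s = T - T / 2 ^ m) {Z J₁ J₂ K₁ K₂ : Ω → ℝ} (hZ : Measurable[F s] Z)
    (hJ₁ : TendstoInMeasure μ (fun n => rsum H₁ B₁ T n) atTop J₁)
    (hJ₂ : TendstoInMeasure μ (fun n => rsum H₂ B₂ T n) atTop J₂)
    (hK₁ : TendstoInMeasure μ (fun n => rsum H₁ B₁ s n) atTop K₁)
    (hK₂ : TendstoInMeasure μ (fun n => rsum H₂ B₂ s n) atTop K₂) :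
    AEMeasurable (fun ω => Z ω - (K₁ ω - K₂ ω) + (J₁ ω - J₂ ω)) μ ∧
    ∀ θ : ℝ, ‖∫ ω, Complex.exp (Complex.I *
      ((θ * (Z ω - (K₁ ω - K₂ ω) + (J₁ ω - J₂ ω)) : ℝ) : ℂ)) ∂μ‖
      ≤ Real.exp (- (θ ^ 2 / 2 * (T / 2 ^ m))) := by
  have hm1 : (1:ℝ) ≤ 2 ^ m := one_le_pow₀ (by norm_num)
  have hs0 : 0 ≤ s := by
    rw [hs, sub_nonneg]; exact div_le_self hT.le hm1
  have rm : ∀ {t : ℝ} (_ : 0 ≤ t) {H W : ℝ → Ω → ℝ} (_ : ∀ t, 0 ≤ t → Measurable[F t] (H t))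
      (_ : IsBM μ F W) (n : ℕ), Measurable[F t] (rsum H W t n) := by
    intro t ht H W hH hW n
    unfold rsum
    refine Finset.measurable_fun_sum _ fun i hi => ?_
    have hi' : ((i:ℝ) + 1) ≤ 2 ^ n := by
      have := Finset.mem_range.mp hi
      exact_mod_cast this
    have hp : (0:ℝ) < 2 ^ n := by positivity
    have a1 : 0 ≤ t * i / 2 ^ n := by positivity
    have a2 : 0 ≤ t * (i + 1) / 2 ^ n := by positivity
    have b2 : t * (i + 1) / 2 ^ n ≤ t := by
      rw [div_le_iff₀ hp]; exact mul_le_mul_of_nonneg_left hi' ht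
    have b1 : t * i / 2 ^ n ≤ t := by
      refine le_trans ?_ b2; gcongr; linarith
    exact ((hH _ a1).mono (hW.mono b1) le_rfl).mul ((hW.meas_F a2 b2).sub (hW.meas_F a1 b1))
  set Y : ℕ → Ω → ℝ := fun n ω => Z ω - (rsum H₁ B₁ s n ω - rsum H₂ B₂ s n ω)
    + (rsum H₁ B₁ T n ω - rsum H₂ B₂ T n ω) with hY
  have hYm : ∀ n, Measurable (Y n) := by
    intro n
    have := hBM.1.le s
    have := hBM.1.le T
    exact (((hZ.sub ((rm hs0 hH₁ hBM.1 n).sub (rm hs0 hH₂ hBM.2.1 n)))).mono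
      (hBM.1.le s) le_rfl).add
      (((rm hT.le hH₁ hBM.1 n).sub (rm hT.le hH₂ hBM.2.1 n)).mono (hBM.1.le T) le_rfl)
  obtain ⟨n1, hn1, c1⟩ := hJ₁.exists_seq_tendsto_ae
  obtain ⟨n2, hn2, c2⟩ := (hJ₂.comp hn1.tendsto_atTop).exists_seq_tendsto_ae
  obtain ⟨n3, hn3, c3⟩ := (hK₁.comp (hn1.comp hn2).tendsto_atTop).exists_seq_tendsto_ae
  obtain ⟨n4, hn4, c4⟩ := (hK₂.comp ((hn1.comp hn2).comp hn3).tendsto_atTop).exists_seq_tendsto_ae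
  set N : ℕ → ℕ := fun k => n1 (n2 (n3 (n4 k))) with hN
  have hNt : Tendsto N atTop atTop := (((hn1.comp hn2).comp hn3).comp hn4).tendsto_atTop
  have hlim : ∀ᵐ ω ∂μ, Tendsto (fun k => Y (N k) ω) atTop
      (nhds (Z ω - (K₁ ω - K₂ ω) + (J₁ ω - J₂ ω))) := by
    filter_upwards [c1, c2, c3, c4] with ω d1 d2 d3 d4
    have e1 := d1.comp ((hn2.comp hn3).comp hn4).tendsto_atTop
    have e2 := d2.comp (hn3.comp hn4).tendsto_atTop
    have e3 := d3.comp hn4.tendsto_atTop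
    exact (tendsto_const_nhds.sub (e3.sub d4)).add (e1.sub e2)
  refine ⟨aemeasurable_of_tendsto_metrizable_ae atTop (fun k => (hYm (N k)).aemeasurable) hlim, ?_⟩
  intro θ
  -- the bound at level `n`
  have hb : ∀ᶠ n : ℕ in atTop, ‖∫ ω, Complex.exp (Complex.I * ((θ * Y n ω : ℝ) : ℂ)) ∂μ‖
      ≤ Real.exp (- (θ ^ 2 / 2 * (T / 2 ^ m))) +
        T / 2 ^ m * (32 * |θ| ^ 3 * kap) * Real.sqrt (T / 2 ^ n) := by
    have hd0 : Tendsto (fun n : ℕ => 1 - θ ^ 2 / 2 * (T / 2 ^ n)) atTop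
        (nhds (1 - θ ^ 2 / 2 * 0)) := by
      refine tendsto_const_nhds.sub (Tendsto.const_mul _ ?_)
      exact tendsto_const_nhds.div_atTop (tendsto_pow_atTop_atTop_of_one_lt (by norm_num))
    have hev := hd0.eventually (lt_mem_nhds (show (0:ℝ) < 1 - θ ^ 2 / 2 * 0 by simp))
    filter_upwards [hev, eventually_ge_atTop m] with n hq hmn
    obtain ⟨p, rfl⟩ := Nat.exists_eq_add_of_le hmn
    set d := T / 2 ^ (m + p) with hd
    have hdpos : 0 < d := by positivity
    obtain ⟨k0, hk0⟩ : ∃ k0 : ℕ, k0 + 2 ^ p = 2 ^ (m + p) := by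
      refine ⟨2 ^ (m + p) - 2 ^ p, Nat.sub_add_cancel ?_⟩
      exact Nat.pow_le_pow_right (by norm_num) (by omega)
    have hk0r : (k0:ℝ) + 2 ^ p = 2 ^ (m + p) := by exact_mod_cast hk0
    have hp2 : (2:ℝ) ^ (m + p) = 2 ^ m * 2 ^ p := pow_add _ _ _
    set u : ℕ → ℝ := fun i => T * ((k0 + i : ℕ) : ℝ) / 2 ^ (m + p) with hu
    have hus : u 0 = s := by
      simp only [hu, hs, add_zero]
      have : (k0:ℝ) = 2 ^ m * 2 ^ p - 2 ^ p := by linarith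
      rw [this, hp2]; field_simp
    have hu0 : ∀ k, 0 ≤ u k := fun k => by simp only [hu]; positivity
    have hud : ∀ k, u (k + 1) - u k = d := fun k => by simp only [hu, hd]; push_cast; ring
    have hu1 : ∀ i : ℕ, u (i + 1) = T * (((k0 + i : ℕ) : ℝ) + 1) / 2 ^ (m + p) := fun i => by
      simp only [hu]; push_cast; ring
    set V : Ω → ℝ := fun ω => Z ω - (rsum H₁ B₁ s (m + p) ω - rsum H₂ B₂ s (m + p) ω)
      + ∑ i ∈ Finset.range k0, (H₁ (T * i / 2 ^ (m + p)) ω *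
          (B₁ (T * (i + 1) / 2 ^ (m + p)) ω - B₁ (T * i / 2 ^ (m + p)) ω)
        - H₂ (T * i / 2 ^ (m + p)) ω *
          (B₂ (T * (i + 1) / 2 ^ (m + p)) ω - B₂ (T * i / 2 ^ (m + p)) ω)) with hV
    have hVm : Measurable[F (u 0)] V := by
      rw [hus]
      refine (hZ.sub ((rm hs0 hH₁ hBM.1 _).sub (rm hs0 hH₂ hBM.2.1 _))).add
        (Finset.measurable_fun_sum _ fun i hi => ?_)
      have hi' : ((i:ℝ) + 1) ≤ k0 := by
        have := Finset.mem_range.mp hi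
        exact_mod_cast this
      have a1 : 0 ≤ T * i / 2 ^ (m + p) := by positivity
      have a2 : 0 ≤ T * (i + 1) / 2 ^ (m + p) := by positivity
      have b2 : T * (i + 1) / 2 ^ (m + p) ≤ s := by
        rw [← hus]; simp only [hu, add_zero]; gcongr
      have b1 : T * i / 2 ^ (m + p) ≤ s := by
        refine le_trans ?_ b2; gcongr; linarith
      exact (((hH₁ _ a1).mono (hBM.1.mono b1) le_rfl).mul
          ((hBM.1.meas_F a2 b2).sub (hBM.1.meas_F a1 b1))).sub
        (((hH₂ _ a1).mono (hBM.1.mono b1) le_rfl).mul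
          ((hBM.2.1.meas_F a2 b2).sub (hBM.2.1.meas_F a1 b1)))
    have hc := chain hBM u hu0 hdpos.le hud (fun i => H₁ (u i)) (fun i => H₂ (u i))
      (fun i => hH₁ _ (hu0 i)) (fun i => hH₂ _ (hu0 i)) (fun i => hH (u i)) hVm θ hq.le (2 ^ p)
    have hYe : ∀ ω, Y (m + p) ω = V ω + ∑ i ∈ Finset.range (2 ^ p),
        (H₁ (u i) ω * (B₁ (u (i + 1)) ω - B₁ (u i) ω)
          - H₂ (u i) ω * (B₂ (u (i + 1)) ω - B₂ (u i) ω)) := by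
      intro ω
      simp only [hY, hV, add_assoc]
      congr 1
      rw [rsum, rsum, ← Finset.sum_sub_distrib, ← hk0, Finset.sum_range_add]
      congr 1
      refine Finset.sum_congr rfl fun i _ => ?_
      rw [hu1]
    simp only [← hYe] at hc
    refine hc.trans (add_le_add ?_ ?_)
    · calc (1 - θ ^ 2 / 2 * d) ^ (2 ^ p) ≤ Real.exp (-(θ ^ 2 / 2 * d)) ^ (2 ^ p) :=
            pow_le_pow_left₀ hq.le (Real.one_sub_le_exp_neg _) _
        _ = Real.exp (- (θ ^ 2 / 2 * (T / 2 ^ m))) := by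
            rw [← Real.exp_nat_mul, hd, hp2]
            congr 1; push_cast; field_simp
    · have h3 : Real.sqrt d ^ 3 = d * Real.sqrt d := by
        rw [pow_succ, Real.sq_sqrt hdpos.le]
      rw [h3]
      refine le_of_eq ?_
      have : ((2 ^ p : ℕ) : ℝ) * d = T / 2 ^ m := by rw [hd, hp2]; push_cast; field_simp
      rw [← this]; ring
  have hR : Tendsto (fun n : ℕ => Real.exp (- (θ ^ 2 / 2 * (T / 2 ^ m))) +
        T / 2 ^ m * (32 * |θ| ^ 3 * kap) * Real.sqrt (T / 2 ^ n)) atTop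
      (nhds (Real.exp (- (θ ^ 2 / 2 * (T / 2 ^ m))))) := by
    have h0 : Tendsto (fun n : ℕ => T / (2:ℝ) ^ n) atTop (nhds 0) :=
      tendsto_const_nhds.div_atTop (tendsto_pow_atTop_atTop_of_one_lt (by norm_num))
    have h1 := (Real.continuous_sqrt.tendsto 0).comp h0
    rw [Real.sqrt_zero] at h1
    simpa using tendsto_const_nhds.add (h1.const_mul (T / 2 ^ m * (32 * |θ| ^ 3 * kap)))
  have hL : Tendsto (fun k => ∫ ω, Complex.exp (Complex.I * ((θ * Y (N k) ω : ℝ) : ℂ)) ∂μ) atTop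
      (nhds (∫ ω, Complex.exp (Complex.I *
        ((θ * (Z ω - (K₁ ω - K₂ ω) + (J₁ ω - J₂ ω)) : ℝ) : ℂ)) ∂μ)) := by
    have hcont : Continuous (fun x : ℝ => Complex.exp (Complex.I * ((θ * x : ℝ) : ℂ))) := by
      fun_prop
    refine tendsto_integral_of_dominated_convergence (fun _ => (1:ℝ))
      (fun k => (hcont.measurable.comp (hYm (N k))).aestronglyMeasurable) (integrable_const _)
      (fun k => Eventually.of_forall fun ω => (Complex.norm_exp_I_mul_ofReal _).le) ?_
    filter_upwards [hlim] with ω hω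
    exact (hcont.tendsto _).comp hω
  exact le_of_tendsto_of_tendsto hL.norm (hR.comp hNt) (hNt.eventually hb)

end

section
set_option linter.unusedSectionVars false
variable {μ : Measure Ω} [IsProbabilityMeasure μ]
  {F : ℝ → MeasurableSpace Ω} {W B₁ B₂ : ℝ → Ω → ℝ}

lemma anti_conc {Y : Ω → ℝ} (hY : AEMeasurable Y μ) {δ c : ℝ} (hc : 0 < c)
    (hch : ∀ θ : ℝ, ‖∫ ω, Complex.exp (Complex.I * ((θ * Y ω : ℝ) : ℂ)) ∂μ‖
      ≤ Real.exp (- (θ ^ 2 / 2 * δ))) (hδ : 0 ≤ δ) :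
    μ.real {ω | |Y ω| ≤ c} ≤
      Real.exp (1 / 2) * ∫ x, Real.exp (-((x / c) ^ 2 / 2 * δ)) ∂(gaussianReal 0 1) := by
  have key : ∀ y : ℝ, ∫ x, Complex.exp (Complex.I * ((x / c * y : ℝ) : ℂ)) ∂(gaussianReal 0 1)
      = ((Real.exp (-((y / c) ^ 2 / 2)) : ℝ) : ℂ) := by
    intro y
    have h := charFun_gaussianReal (μ := 0) (v := 1) (t := y / c)
    rw [charFun_apply_real] at h
    push_cast at h ⊢
    rw [show (-((y / c : ℂ) ^ 2 / 2)) = ((y : ℂ) / c * 0 * Complex.I - 1 * ((y : ℂ) / c) ^ 2 / 2) by ring]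
    rw [← h]
    congr 1
    funext x
    congr 1
    ring
  have hmeas : AEStronglyMeasurable
      (fun p : Ω × ℝ => Complex.exp (Complex.I * ((p.2 / c * Y p.1 : ℝ) : ℂ)))
      (μ.prod (gaussianReal 0 1)) := by
    have h1 : AEMeasurable (fun p : Ω × ℝ => p.2 / c * Y p.1) (μ.prod (gaussianReal 0 1)) :=
      (measurable_snd.div_const c).aemeasurable.mul hY.comp_fst
    have h2 : Measurable (fun x : ℝ => Complex.exp (Complex.I * (x : ℂ))) := by fun_prop
    exact (h2.comp_aemeasurable h1).aestronglyMeasurable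
  have hIntg : Integrable
      (fun p : Ω × ℝ => Complex.exp (Complex.I * ((p.2 / c * Y p.1 : ℝ) : ℂ)))
      (μ.prod (gaussianReal 0 1)) :=
    Integrable.of_bound hmeas 1
      (Eventually.of_forall fun p => (Complex.norm_exp_I_mul_ofReal _).le)
  have hG : AEMeasurable (fun ω => Real.exp (-((Y ω / c) ^ 2 / 2))) μ := by
    have h2 : Measurable (fun x : ℝ => Real.exp (-((x / c) ^ 2 / 2))) := by fun_prop
    exact h2.comp_aemeasurable hY
  have hGi : Integrable (fun ω => Real.exp (-((Y ω / c) ^ 2 / 2))) μ := by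
    refine Integrable.of_bound hG.aestronglyMeasurable 1 (Eventually.of_forall fun ω => ?_)
    rw [Real.norm_of_nonneg (Real.exp_nonneg _), Real.exp_le_one_iff]
    have := sq_nonneg (Y ω / c)
    linarith
  have h1 : ∫ ω, Real.exp (-((Y ω / c) ^ 2 / 2)) ∂μ
      ≤ ∫ x, Real.exp (-((x / c) ^ 2 / 2 * δ)) ∂(gaussianReal 0 1) := by
    have e : ((∫ ω, Real.exp (-((Y ω / c) ^ 2 / 2)) ∂μ : ℝ) : ℂ)
        = ∫ x, ∫ ω, Complex.exp (Complex.I * ((x / c * Y ω : ℝ) : ℂ)) ∂μ ∂(gaussianReal 0 1) := by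
      rw [← integral_complex_ofReal]
      simp_rw [← key]
      exact integral_integral_swap hIntg
    have h0 : 0 ≤ ∫ ω, Real.exp (-((Y ω / c) ^ 2 / 2)) ∂μ :=
      integral_nonneg fun ω => Real.exp_nonneg _
    rw [← abs_of_nonneg h0, ← Real.norm_eq_abs, ← Complex.norm_real, e]
    refine norm_integral_le_of_norm_le ?_ (Eventually.of_forall fun x => hch (x / c))
    have hm : Measurable (fun x : ℝ => Real.exp (-((x / c) ^ 2 / 2 * δ))) := by fun_prop
    refine Integrable.of_bound hm.aestronglyMeasurable 1 (Eventually.of_forall fun x => ?_)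
    rw [Real.norm_of_nonneg (Real.exp_nonneg _), Real.exp_le_one_iff]
    have := mul_nonneg (sq_nonneg (x / c)) hδ
    linarith
  have hms : NullMeasurableSet {ω | |Y ω| ≤ c} μ :=
    nullMeasurableSet_le hY.abs aemeasurable_const
  have h2 : μ.real {ω | |Y ω| ≤ c}
      ≤ ∫ ω, Real.exp (1 / 2) * Real.exp (-((Y ω / c) ^ 2 / 2)) ∂μ := by
    have : μ.real {ω | |Y ω| ≤ c} = ∫ ω, ({ω | |Y ω| ≤ c}.indicator (fun _ => (1:ℝ))) ω ∂μ := by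
      rw [integral_indicator₀ hms]; simp
    rw [this]
    refine integral_mono_of_nonneg (Eventually.of_forall fun ω => ?_) (hGi.const_mul _)
      (Eventually.of_forall fun ω => ?_)
    · exact Set.indicator_nonneg (fun _ _ => zero_le_one) _
    · by_cases hω : |Y ω| ≤ c
      · simp only [Set.indicator, Set.mem_ofPred_eq, hω, if_true]
        rw [← Real.exp_add]
        apply Real.one_le_exp
        have : (Y ω / c) ^ 2 ≤ 1 := by
          rw [sq_le_one_iff_abs_le_one, abs_div, abs_of_pos hc]
          exact (div_le_one hc).2 hω
        linarith
      · simp only [Set.indicator, Set.mem_ofPred_eq, hω, if_false]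
        positivity
  rw [integral_const_mul] at h2
  exact h2.trans (mul_le_mul_of_nonneg_left h1 (Real.exp_nonneg _))

lemma gauss_lim {T a : ℝ} (hT : 0 < T) (ha : 0 < a) :
    Tendsto (fun m : ℕ => Real.exp (1 / 2) * ∫ x,
      Real.exp (-((x / (a * (T / 2 ^ m))) ^ 2 / 2 * (T / 2 ^ m))) ∂(gaussianReal 0 1))
      atTop (nhds 0) := by
  have h : Tendsto (fun m : ℕ => ∫ x,
      Real.exp (-((x / (a * (T / 2 ^ m))) ^ 2 / 2 * (T / 2 ^ m))) ∂(gaussianReal 0 1))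
      atTop (nhds (∫ x, (0:ℝ) ∂(gaussianReal 0 1))) := by
    refine tendsto_integral_of_dominated_convergence (fun _ => 1) (fun m => ?_)
      (integrable_const _) (fun m => Eventually.of_forall fun x => ?_) ?_
    · have : Measurable fun x : ℝ =>
        Real.exp (-((x / (a * (T / 2 ^ m))) ^ 2 / 2 * (T / 2 ^ m))) := by fun_prop
      exact this.aestronglyMeasurable
    · rw [Real.norm_of_nonneg (Real.exp_nonneg _), Real.exp_le_one_iff]
      have : 0 ≤ (x / (a * (T / 2 ^ m))) ^ 2 / 2 * (T / 2 ^ m) := by positivity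
      linarith
    · have hna : NullSingletonClass (gaussianReal 0 1) :=
        nullSingletonClass_gaussianReal one_ne_zero
      have h0 : ∀ᵐ x ∂(gaussianReal 0 1), x ≠ 0 := by
        rw [ae_iff]
        simp only [ne_eq, not_not]
        exact hna.measure_singleton 0
      filter_upwards [h0] with x hx
      have e : ∀ m : ℕ, (x / (a * (T / 2 ^ m))) ^ 2 / 2 * (T / 2 ^ m)
          = x ^ 2 / (2 * a ^ 2 * T) * 2 ^ m := by
        intro m; field_simp
      simp_rw [e]
      refine Real.tendsto_exp_neg_atTop_nhds_zero.comp ?_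
      exact (tendsto_pow_atTop_atTop_of_one_lt one_lt_two).const_mul_atTop (by positivity)
  simp only [integral_zero] at h
  simpa using h.const_mul (Real.exp (1 / 2))

lemma null_at (g h ρ σ : ℝ) (hg : 0 ≤ g) (hh : 0 ≤ h)
    (hnorm : ρ ^ 2 + σ ^ 2 = 1) (hgh : 0 < g + h) (x₁ x₂ : ℝ) {X₁ X₂ : ℝ → Ω → ℝ}
    (hBM : IsPlanarBM μ F B₁ B₂)
    (hsol : Solves11 μ F g h ρ σ x₁ x₂ B₁ B₂ X₁ X₂) {T : ℝ} (hT : 0 < T) :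
    ∀ᵐ ω ∂μ, X₁ T ω ≠ X₂ T ω := by
  obtain ⟨had, hcont, I₁, I₂, hI₁, hI₂, heq⟩ := hsol
  have hX : ∀ t, 0 ≤ t → Measurable[F t] (fun ω => (X₁ t ω, X₂ t ω)) := fun t ht =>
    measurable_iff_comap_le.2 (had t ht)
  have hset : ∀ t, 0 ≤ t → MeasurableSet[F t] {ω | X₁ t ω ≤ X₂ t ω} := fun t ht =>
    hX t ht (measurableSet_le measurable_fst measurable_snd)
  have hbound : ∀ n : ℕ, μ.real {ω | X₁ T ω = X₂ T ω} ≤ Real.exp (1 / 2) * ∫ x,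
      Real.exp (-((x / (2 * (g + h) * (T / 2 ^ n))) ^ 2 / 2 * (T / 2 ^ n)))
        ∂(gaussianReal 0 1) := by
    intro n
    have hδ : 0 < T / 2 ^ n := by positivity
    have hδT : T / 2 ^ n ≤ T := div_le_self hT.le (one_le_pow₀ one_le_two)
    obtain ⟨s, hs⟩ : ∃ s, s = T - T / 2 ^ n := ⟨_, rfl⟩
    have hs0 : 0 ≤ s := by linarith
    have hZ : Measurable[F s] (fun ω => X₁ s ω - X₂ s ω) :=
      (measurable_fst.sub measurable_snd).comp (hX s hs0)
    have hc := char_lim hBM (fun t ω => if X₁ t ω ≤ X₂ t ω then σ else ρ)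
      (fun t ω => if X₁ t ω ≤ X₂ t ω then ρ else σ)
      (fun t ht => Measurable.ite (hset t ht) measurable_const measurable_const)
      (fun t ht => Measurable.ite (hset t ht) measurable_const measurable_const)
      (fun t ω => by split_ifs <;> linarith) hT n hs hZ
      (hI₁.2 T hT.le) (hI₂.2 T hT.le) (hI₁.2 s hs0) (hI₂.2 s hs0)
    refine le_trans ?_ (anti_conc hc.1 (c := 2 * (g + h) * (T / 2 ^ n)) (by positivity) hc.2 hδ.le)
    refine ENNReal.toReal_mono (measure_ne_top _ _) (measure_mono_ae ?_)
    filter_upwards [hcont, heq] with ω hω he hmem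
    have hmem' : X₁ T ω = X₂ T ω := hmem
    have hle : MeasurableSet {t | X₁ t ω ≤ X₂ t ω} := (isClosed_le hω.1 hω.2).measurableSet
    have hii : ∀ (a b p q : ℝ), IntervalIntegrable
        (fun t => if X₁ t ω ≤ X₂ t ω then p else q) volume a b := by
      intro a b p q
      refine (intervalIntegrable_const (c := |p| + |q|)).mono_fun
        (Measurable.ite hle measurable_const measurable_const).aestronglyMeasurable
        (Eventually.of_forall fun t => ?_)
      simp only [Real.norm_eq_abs]
      rw [abs_of_nonneg (by positivity : 0 ≤ |p| + |q|)]
      split_ifs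
      · linarith [abs_nonneg q]
      · linarith [abs_nonneg p]
    have hb : ∀ (p q : ℝ), |p| ≤ g + h → |q| ≤ g + h →
        |∫ t in s..T, (if X₁ t ω ≤ X₂ t ω then p else q)| ≤ (g + h) * (T / 2 ^ n) := by
      intro p q hp hq
      have := intervalIntegral.norm_integral_le_of_norm_le_const (a := s) (b := T)
        (f := fun t => if X₁ t ω ≤ X₂ t ω then p else q) (C := g + h)
        (fun t _ => by rw [Real.norm_eq_abs]; split_ifs <;> assumption)
      rw [Real.norm_eq_abs, abs_of_nonneg (by linarith : 0 ≤ T - s)] at this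
      rwa [hs, sub_sub_cancel, ← hs] at this
    have hg' : |g| ≤ g + h := by rw [abs_of_nonneg hg]; linarith
    have hh' : |-h| ≤ g + h := by rw [abs_neg, abs_of_nonneg hh]; linarith
    have b1 := hb g (-h) hg' hh'
    have b2 := hb (-h) g hh' hg'
    have a1 := intervalIntegral.integral_add_adjacent_intervals (hii 0 s g (-h)) (hii s T g (-h))
    have a2 := intervalIntegral.integral_add_adjacent_intervals (hii 0 s (-h) g) (hii s T (-h) g)
    obtain ⟨e1, e2⟩ := he T hT.le
    obtain ⟨e3, e4⟩ := he s hs0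
    change |X₁ s ω - X₂ s ω - (I₁ s ω - I₂ s ω) + (I₁ T ω - I₂ T ω)| ≤ 2 * (g + h) * (T / 2 ^ n)
    rw [abs_le] at b1 b2 ⊢
    constructor <;> nlinarith [b1.1, b1.2, b2.1, b2.2]
  have h0 : μ.real {ω | X₁ T ω = X₂ T ω} ≤ 0 :=
    ge_of_tendsto' (gauss_lim hT (by positivity : 0 < 2 * (g + h))) hbound
  rw [ae_iff]
  simp only [ne_eq, not_not]
  exact (measureReal_eq_zero_iff).1 (le_antisymm h0 measureReal_nonneg)

lemma main_aux (g h ρ σ : ℝ) (hg : 0 ≤ g) (hh : 0 ≤ h)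
    (hnorm : ρ ^ 2 + σ ^ 2 = 1) (hgh : 0 < g + h) (x₁ x₂ : ℝ) {X₁ X₂ : ℝ → Ω → ℝ}
    (hBM : IsPlanarBM μ F B₁ B₂)
    (hsol : Solves11 μ F g h ρ σ x₁ x₂ B₁ B₂ X₁ X₂) :
    ∀ᵐ ω ∂μ, volume {t : ℝ | 0 ≤ t ∧ X₁ t ω = X₂ t ω} = 0 := by
  have hnull := fun (T : ℝ) (hT : 0 < T) =>
    null_at g h ρ σ hg hh hnorm hgh x₁ x₂ hBM hsol hT
  obtain ⟨had, hcont, -⟩ := hsol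
  have hX : ∀ t, 0 ≤ t → Measurable (fun ω => (X₁ t ω, X₂ t ω)) := fun t ht =>
    (measurable_iff_comap_le.2 (had t ht)).mono (hBM.1.le t) le_rfl
  set N := toMeasurable μ {ω | ¬ (Continuous (fun t => X₁ t ω) ∧ Continuous (fun t => X₂ t ω))}
    with hN
  have hN0 : μ N = 0 := by rw [hN, measure_toMeasurable]; exact ae_iff.1 hcont
  have hNm : MeasurableSet N := measurableSet_toMeasurable _ _
  classical
  set Y : ℝ → Ω → ℝ := fun t ω => if ω ∈ N then 0 else X₁ (max t 0) ω - X₂ (max t 0) ω with hY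
  have hYm : ∀ t, Measurable (Y t) := fun t =>
    Measurable.ite hNm measurable_const
      ((measurable_fst.sub measurable_snd).comp (hX (max t 0) (le_max_right _ _)))
  have hYc : ∀ ω, Continuous fun t => Y t ω := by
    intro ω
    by_cases hω : ω ∈ N
    · simp only [hY, hω, if_true]; exact continuous_const
    · have hc : Continuous (fun t => X₁ t ω) ∧ Continuous (fun t => X₂ t ω) := by
        by_contra hcon
        exact hω (subset_toMeasurable _ _ hcon)
      simp only [hY, hω, if_false]
      have hm : Continuous fun t : ℝ => max t 0 := by fun_prop
      exact (hc.1.comp hm).sub (hc.2.comp hm)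
  have hYu : Measurable (Function.uncurry Y) :=
    measurable_uncurry_of_continuous_of_measurable hYc hYm
  have hms : MeasurableSet {p : ℝ × Ω | 0 < p.1 → Y p.1 p.2 ≠ 0} := by
    have e : {p : ℝ × Ω | 0 < p.1 → Y p.1 p.2 ≠ 0}
        = ({p : ℝ × Ω | 0 < p.1} ∩ {p | Function.uncurry Y p = 0})ᶜ := by
      ext p; simp [Function.uncurry]
    rw [e]
    exact ((measurableSet_lt measurable_const measurable_fst).inter
      (hYu (measurableSet_singleton 0))).compl
  have hNae : ∀ᵐ ω ∂μ, ω ∉ N := by rw [ae_iff]; simpa using hN0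
  have h1 : ∀ᵐ t ∂(volume : Measure ℝ), ∀ᵐ ω ∂μ, 0 < t → Y t ω ≠ 0 := by
    refine Eventually.of_forall fun t => ?_
    by_cases ht : 0 < t
    · filter_upwards [hnull t ht, hNae] with ω h1 h2 _
      simp only [hY, h2, if_false, max_eq_left ht.le]
      exact sub_ne_zero.2 h1
    · exact Eventually.of_forall fun ω h => absurd h ht
  have h2 := (Measure.ae_ae_comm hms).1 h1
  filter_upwards [h2, hNae] with ω h3 h4
  have h5 : ∀ᵐ t ∂(volume : Measure ℝ), t ≠ 0 := by rw [ae_iff]; simp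
  have h6 : ∀ᵐ t ∂(volume : Measure ℝ), ¬ (0 ≤ t ∧ X₁ t ω = X₂ t ω) := by
    filter_upwards [h3, h5] with t h7 h8
    rintro ⟨h9, h10⟩
    have h11 : 0 < t := lt_of_le_of_ne h9 (Ne.symm h8)
    apply h7 h11
    simp only [hY, h4, if_false, max_eq_left h9, h10, sub_self]
  rw [ae_iff] at h6
  simpa using h6

end

/-- Remark 3 of the paper. For any weak solution of the system
(1.1)-(1.2), the set of times at which the two components coincide is almost surely
Lebesgue-null. -/
theorem coincidence_set_lebesgue_null
    (g h ρ σ : ℝ) (hg : 0 ≤ g) (hh : 0 ≤ h) (hρ : 0 ≤ ρ) (hσ : 0 ≤ σ)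
    (hnorm : ρ ^ 2 + σ ^ 2 = 1) (hgh : 0 < g + h) (x₁ x₂ : ℝ)
    {Ω : Type*} [mΩ : MeasurableSpace Ω] (μ : Measure Ω) [IsProbabilityMeasure μ]
    (F : ℝ → MeasurableSpace Ω) (B₁ B₂ X₁ X₂ : ℝ → Ω → ℝ)
    (hBM : IsPlanarBM μ F B₁ B₂)
    (hsol : Solves11 μ F g h ρ σ x₁ x₂ B₁ B₂ X₁ X₂) :
    ∀ᵐ ω ∂μ, volume {t : ℝ | 0 ≤ t ∧ X₁ t ω = X₂ t ω} = 0 := by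
  exact main_aux g h ρ σ hg hh hnorm hgh x₁ x₂ hBM hsol

end SDEPaper
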